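/- The function g(r) = (2/π)·𝒦(r)·𝒦'(r) + log(r'/r) is strictly decreasing on (0,1); moreover g(r) → ∞ as r → 0⁺ and g(r) → log 4 as r → 1⁻, so g maps (0,1) onto (log 4, ∞). -/

import Mathlib

open Set Filter

/-- Complete elliptic integral of the first kind. -/
noncomputable def ellK (r : ℝ) : ℝ :=
  ∫ θ in (0:ℝ)..(Real.pi / 2), (1 - r ^ 2 * Real.sin θ ^ 2) ^ (-(1/2) : ℝ)

/-- The Grötzsch modulus μ(r) = (π/2)·𝒦'(r)/𝒦(r). -/
noncomputable def mu (r : ℝ) : ℝ :=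
  Real.pi / 2 * ellK (Real.sqrt (1 - r ^ 2)) / ellK r

/-!
Work in the parameter `m = r²`, where `g` becomes
`G(m) = (2/π) K(m) K(1 - m) + (log (1 - m) - log m) / 2`, and replace the second kind integral by
Legendre's `B(m) = ∫₀^{π/2} cos² θ (1 - m sin² θ)^(-1/2) dθ`, which is positive. The derivatives
`K' = B / (2(1 - m))` and `(m B)' = K / 2` show that `m B(m) K(1 - m) + (1 - m) B(1 - m) K(m)` is
constant, and its limit at `m = 1` is `π / 2`: this is Legendre's relation. It turns the derivative
of `G` into `-(2/π) K(m) B(1 - m) / m < 0`. The limit `log 4` is the asymptotic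
`K(m) + log (1 - m) / 2 → log 4` as `m → 1`, obtained by writing the weight `1` of `K` as
`(1 - sin θ) + sin θ`: the first part has a finite limit and the second one is elementary.
-/

open scoped Topology in
theorem image_Ioo_eq_Ioi_of_strictAntiOn {α β : Type*} [ConditionallyCompleteLinearOrder α]
    [TopologicalSpace α] [OrderTopology α] [DenselyOrdered α] [LinearOrder β] [TopologicalSpace β]
    [OrderClosedTopology β] {f : α → β} {a b : α} {c : β} (hab : a < b)
    (hf : StrictAntiOn f (Ioo a b)) (hf_cont : ContinuousOn f (Ioo a b))
    (ha : Tendsto f (𝓝[>] a) atTop) (hb : Tendsto f (𝓝[<] b) (𝓝 c)) :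
    f '' Ioo a b = Ioi c := by
  have := nhdsGT_neBot_of_exists_gt ⟨b, hab⟩
  have := nhdsLT_neBot_of_exists_lt ⟨a, hab⟩
  refine Subset.antisymm ?_ (isPreconnected_Ioo.intermediate_value_Ioi
    (le_principal_iff.mpr (Ioo_mem_nhdsLT hab)) (le_principal_iff.mpr (Ioo_mem_nhdsGT hab))
    hf_cont hb ha)
  rintro _ ⟨x, hx, rfl⟩
  obtain ⟨y, hxy, hyb⟩ := exists_between hx.2
  have hy : y ∈ Ioo a b := ⟨hx.1.trans hxy, hyb⟩
  have hc : c ≤ f y := by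
    refine le_of_tendsto hb ?_
    filter_upwards [Ioo_mem_nhdsLT hyb] with z hz
    exact (hf hy ⟨hy.1.trans hz.1, hz.2⟩ hz.1).le
  exact hc.trans_lt (hf hx hy hxy)

namespace EllipticIntegral

open Real MeasureTheory
open scoped Topology Interval

section Weighted

variable {m : ℝ} {w w₁ w₂ : ℝ → ℝ}

/-- The complete elliptic integral `∫₀^{π/2} w(θ) (1 - m sin² θ)^s dθ` with weight `w` and
exponent `s`. The argument is the parameter `m = r²` and not the modulus `r`, so that the
derivatives in `m` are regular at `m = 0`. -/
noncomputable def weighted (w : ℝ → ℝ) (s m : ℝ) : ℝ :=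
  ∫ θ in (0 : ℝ)..(π / 2), w θ * (1 - m * sin θ ^ 2) ^ s

theorem one_sub_mul_sin_sq_pos (hm : m < 1) (θ : ℝ) : 0 < 1 - m * sin θ ^ 2 := by
  rcases le_total m 0 with hm₀ | hm₀
  · linarith [mul_nonpos_of_nonpos_of_nonneg hm₀ (sq_nonneg (sin θ))]
  · exact sub_pos.mpr (mul_lt_one_of_nonneg_of_lt_one_left hm₀ hm (sin_sq_le_one θ))

theorem continuous_one_sub_mul_sin_sq_rpow (hm : m < 1) (s : ℝ) :
    Continuous fun θ => (1 - m * sin θ ^ 2) ^ s :=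
  Continuous.rpow_const (by fun_prop) fun θ => .inl (one_sub_mul_sin_sq_pos hm θ).ne'

theorem intervalIntegrable_mul_rpow (hm : m < 1) (hw : IntervalIntegrable w volume 0 (π / 2))
    (s : ℝ) : IntervalIntegrable (fun θ => w θ * (1 - m * sin θ ^ 2) ^ s) volume 0 (π / 2) :=
  hw.mul_continuousOn (continuous_one_sub_mul_sin_sq_rpow hm s).continuousOn

theorem weighted_add (hm : m < 1) (hw₁ : IntervalIntegrable w₁ volume 0 (π / 2))
    (hw₂ : IntervalIntegrable w₂ volume 0 (π / 2)) (s : ℝ) :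
    weighted (fun θ => w₁ θ + w₂ θ) s m = weighted w₁ s m + weighted w₂ s m := by
  simp only [weighted, add_mul]
  exact intervalIntegral.integral_add (intervalIntegrable_mul_rpow hm hw₁ s)
    (intervalIntegrable_mul_rpow hm hw₂ s)

theorem weighted_const_mul (c : ℝ) (w : ℝ → ℝ) (s m : ℝ) :
    weighted (fun θ => c * w θ) s m = c * weighted w s m := by
  simp only [weighted, mul_assoc, intervalIntegral.integral_const_mul]

theorem weighted_add_one (hm : m < 1) (w : ℝ → ℝ) (s : ℝ) :
    weighted w (s + 1) m = weighted (fun θ => w θ * (1 - m * sin θ ^ 2)) s m := by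
  refine intervalIntegral.integral_congr fun θ _ => ?_
  simp only [rpow_add_one (one_sub_mul_sin_sq_pos hm θ).ne']
  ring

theorem weighted_pos (hm : m < 1) (hw : IntervalIntegrable w volume 0 (π / 2))
    (hw_pos : ∀ θ ∈ Ioo 0 (π / 2), 0 < w θ) (s : ℝ) : 0 < weighted w s m :=
  intervalIntegral.intervalIntegral_pos_of_pos_on (intervalIntegrable_mul_rpow hm hw s)
    (fun θ hθ => mul_pos (hw_pos θ hθ) (rpow_pos_of_pos (one_sub_mul_sin_sq_pos hm θ) s))
    (by positivity)

theorem exists_bound_one_sub_mul_sin_sq_rpow (hm : m < 1) (s : ℝ) :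
    ∃ C, ∀ᶠ x in 𝓝 m, ∀ θ ∈ Ι 0 (π / 2), ‖(1 - x * sin θ ^ 2) ^ s‖ ≤ C := by
  obtain ⟨c, hmc, hc⟩ := exists_between hm
  have h_cont : ContinuousOn (fun p : ℝ × ℝ => (1 - p.1 * sin p.2 ^ 2) ^ s)
      (Icc (m - 1) c ×ˢ Icc 0 (π / 2)) :=
    ContinuousOn.rpow_const (by fun_prop)
      fun p hp => .inl (one_sub_mul_sin_sq_pos (hp.1.2.trans_lt hc) p.2).ne'
  obtain ⟨C, hC⟩ := (isCompact_Icc.prod isCompact_Icc).exists_bound_of_continuousOn h_cont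
  refine ⟨C, ?_⟩
  filter_upwards [Icc_mem_nhds (sub_one_lt m) hmc] with x hx θ hθ
  rw [uIoc_of_le (by positivity)] at hθ
  exact hC (x, θ) ⟨hx, Ioc_subset_Icc_self hθ⟩

theorem hasDerivAt_one_sub_mul_sin_sq_rpow (hm : m < 1) (s θ : ℝ) :
    HasDerivAt (fun x : ℝ => (1 - x * sin θ ^ 2) ^ s)
      (-s * (sin θ ^ 2 * (1 - m * sin θ ^ 2) ^ (s - 1))) m := by
  have h := (((hasDerivAt_id m).mul_const (sin θ ^ 2)).const_sub 1).rpow_const (p := s)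
    (.inl (one_sub_mul_sin_sq_pos hm θ).ne')
  refine h.congr_deriv ?_
  simp only [id]
  ring

theorem hasDerivAt_weighted (hm : m < 1) (hw : IntervalIntegrable w volume 0 (π / 2)) (s : ℝ) :
    HasDerivAt (weighted w s) (-s * weighted (fun θ => w θ * sin θ ^ 2) (s - 1) m) m := by
  obtain ⟨C, hC⟩ := exists_bound_one_sub_mul_sin_sq_rpow hm (s - 1)
  have hw_sin : IntervalIntegrable (fun θ => -s * (w θ * sin θ ^ 2)) volume 0 (π / 2) :=
    (hw.mul_continuousOn (by fun_prop)).const_mul _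
  rw [← weighted_const_mul]
  refine (intervalIntegral.hasDerivAt_integral_of_dominated_loc_of_deriv_le
    (F := fun x θ => w θ * (1 - x * sin θ ^ 2) ^ s)
    (F' := fun x θ => -s * (w θ * sin θ ^ 2) * (1 - x * sin θ ^ 2) ^ (s - 1))
    (bound := fun θ => ‖-s * (w θ * sin θ ^ 2)‖ * C)
    ((eventually_lt_nhds hm).and hC) ?_ (intervalIntegrable_mul_rpow hm hw s)
    (intervalIntegrable_mul_rpow hm hw_sin _).def'.aestronglyMeasurable ?_
    (hw_sin.norm.mul_const C) ?_).2
  · filter_upwards [Iio_mem_nhds hm] with x hx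
    exact (intervalIntegrable_mul_rpow hx hw s).def'.aestronglyMeasurable
  · refine .of_forall fun θ hθ x hx => ?_
    rw [norm_mul]
    gcongr
    exact hx.2 θ hθ
  · refine .of_forall fun θ _ x hx => ?_
    refine ((hasDerivAt_one_sub_mul_sin_sq_rpow hx.1 s θ).const_mul (w θ)).congr_deriv ?_
    ring

theorem continuousAt_weighted (hm : m < 1) (hw : IntervalIntegrable w volume 0 (π / 2)) (s : ℝ) :
    ContinuousAt (weighted w s) m :=
  (hasDerivAt_weighted hm hw s).continuousAt

theorem hasDerivAt_weighted_neg_half (hm : m < 1) (hw : IntervalIntegrable w volume 0 (π / 2)) :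
    HasDerivAt (weighted w (-(1/2)))
      (1 / 2 * weighted (fun θ => w θ * sin θ ^ 2) (-(3/2)) m) m := by
  have h := hasDerivAt_weighted hm hw (-(1/2))
  norm_num at h ⊢
  exact h

theorem cos_mul_rpow_neg_half_le_one (hm : m ∈ Ioo 0 1) (θ : ℝ) :
    cos θ * (1 - m * sin θ ^ 2) ^ (-(1/2) : ℝ) ≤ 1 := by
  have h_pos := one_sub_mul_sin_sq_pos hm.2 θ
  rw [rpow_neg h_pos.le, ← sqrt_eq_rpow, ← div_eq_mul_inv, div_le_one (sqrt_pos.mpr h_pos)]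
  refine le_sqrt_of_sq_le ?_
  nlinarith [sin_sq_add_cos_sq θ, sq_nonneg (sin θ), hm.2]

theorem tendsto_cos_mul_rpow_neg_half {θ : ℝ} (hθ : 0 < cos θ) :
    Tendsto (fun m => cos θ * (1 - m * sin θ ^ 2) ^ (-(1/2) : ℝ)) (𝓝 1) (𝓝 1) := by
  have h_sq : 1 - 1 * sin θ ^ 2 = cos θ ^ 2 := by linarith [sin_sq_add_cos_sq θ]
  have h_cont : ContinuousAt (fun m => cos θ * (1 - m * sin θ ^ 2) ^ (-(1/2) : ℝ)) 1 :=
    continuousAt_const.mul (ContinuousAt.rpow_const (by fun_prop) (.inl (by rw [h_sq]; positivity)))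
  have h_one : cos θ * (1 - 1 * sin θ ^ 2) ^ (-(1/2) : ℝ) = 1 := by
    rw [h_sq, rpow_neg (sq_nonneg _), ← sqrt_eq_rpow, sqrt_sq hθ.le, mul_inv_cancel₀ hθ.ne']
  simpa only [h_one] using h_cont.tendsto

theorem tendsto_weighted_mul_cos {f : ℝ → ℝ} (hf : IntervalIntegrable f volume 0 (π / 2)) :
    Tendsto (weighted (fun θ => f θ * cos θ) (-(1/2))) (𝓝[<] 1)
      (𝓝 (∫ θ in (0 : ℝ)..(π / 2), f θ)) := by
  refine intervalIntegral.tendsto_integral_filter_of_dominated_convergence (fun θ => ‖f θ‖)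
    ?_ ?_ hf.norm ?_
  · filter_upwards [self_mem_nhdsWithin] with m hm
    exact (intervalIntegrable_mul_rpow hm
      (hf.mul_continuousOn continuous_cos.continuousOn) _).def'.aestronglyMeasurable
  · filter_upwards [Ioo_mem_nhdsLT zero_lt_one] with m hm
    refine .of_forall fun θ hθ => ?_
    rw [uIoc_of_le (by positivity)] at hθ
    have h_cos : 0 ≤ cos θ := cos_nonneg_of_mem_Icc ⟨by linarith [hθ.1, pi_pos], hθ.2⟩
    have h_rpow := rpow_nonneg (one_sub_mul_sin_sq_pos hm.2 θ).le (-(1/2))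
    rw [mul_assoc, norm_mul, norm_of_nonneg (mul_nonneg h_cos h_rpow)]
    exact mul_le_of_le_one_right (norm_nonneg _)
      (cos_mul_rpow_neg_half_le_one hm θ)
  · filter_upwards [compl_mem_ae_iff.mpr (measure_singleton (π / 2))] with θ hθ_ne hθ
    rw [uIoc_of_le (by positivity)] at hθ
    have h_cos : 0 < cos θ :=
      cos_pos_of_mem_Ioo ⟨by linarith [hθ.1, pi_pos], lt_of_le_of_ne hθ.2 hθ_ne⟩
    simpa only [mul_assoc, mul_one] using
      ((tendsto_cos_mul_rpow_neg_half h_cos).mono_left nhdsWithin_le_nhds).const_mul (f θ)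

end Weighted

section CompleteIntegrals

variable {m : ℝ}

/-- The complete elliptic integral of the first kind as a function of the parameter `m = r²`. -/
noncomputable def K (m : ℝ) : ℝ := weighted (fun _ => 1) (-(1/2)) m

/-- Legendre's complete integral `B(m) = ∫₀^{π/2} cos² θ (1 - m sin² θ)^(-1/2) dθ`. In terms of the
integral `E` of the second kind, `m B = E - (1 - m) K`. -/
noncomputable def B (m : ℝ) : ℝ := weighted (fun θ => cos θ ^ 2) (-(1/2)) m

theorem K_pos (hm : m < 1) : 0 < K m :=
  weighted_pos hm (by simp) (fun _ _ => one_pos) _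

theorem B_pos (hm : m < 1) : 0 < B m :=
  weighted_pos hm (Continuous.intervalIntegrable (by fun_prop) _ _)
    (fun _ hθ => pow_pos (cos_pos_of_mem_Ioo ⟨by linarith [hθ.1, pi_pos], hθ.2⟩) 2) _

theorem K_zero : K 0 = π / 2 := by simp [K, weighted]

theorem continuousAt_B (hm : m < 1) : ContinuousAt B m :=
  continuousAt_weighted hm (Continuous.intervalIntegrable (by fun_prop) _ _) _

theorem hasDerivAt_sin_mul_cos_mul_rpow (hm : m < 1) (θ : ℝ) :
    HasDerivAt (fun θ => sin θ * cos θ * (1 - m * sin θ ^ 2) ^ (-(1/2) : ℝ))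
      (cos θ ^ 2 * (1 - m * sin θ ^ 2) ^ (-(1/2) : ℝ)
        - (1 - m) * (sin θ ^ 2 * (1 - m * sin θ ^ 2) ^ (-(3/2) : ℝ))) θ := by
  have h_pos := one_sub_mul_sin_sq_pos hm θ
  have h_inner : HasDerivAt (fun θ => 1 - m * sin θ ^ 2) (-(m * (2 * sin θ * cos θ))) θ := by
    simpa using (((hasDerivAt_sin θ).fun_pow 2).const_mul m).const_sub 1
  have h_rpow : (1 - m * sin θ ^ 2) ^ (-(1/2) : ℝ)
      = (1 - m * sin θ ^ 2) ^ (-(3/2) : ℝ) * (1 - m * sin θ ^ 2) := by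
    rw [← rpow_add_one h_pos.ne']; norm_num
  refine (((hasDerivAt_sin θ).fun_mul (hasDerivAt_cos θ)).fun_mul
    (h_inner.rpow_const (p := -(1/2)) (.inl h_pos.ne'))).congr_deriv ?_
  rw [show (-(1/2) : ℝ) - 1 = -(3/2) by norm_num, h_rpow]
  linear_combination
    (m * sin θ ^ 2 * (1 - m * sin θ ^ 2) ^ (-(3/2) : ℝ)) * sin_sq_add_cos_sq θ

theorem B_eq_one_sub_mul_weighted (hm : m < 1) :
    B m = (1 - m) * weighted (fun θ => sin θ ^ 2) (-(3/2)) m := by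
  have h_cos := intervalIntegrable_mul_rpow hm (w := fun θ => cos θ ^ 2)
    (Continuous.intervalIntegrable (by fun_prop) _ _) (-(1/2))
  have h_sin := (intervalIntegrable_mul_rpow hm (w := fun θ => sin θ ^ 2)
    (Continuous.intervalIntegrable (by fun_prop) _ _) (-(3/2))).const_mul (1 - m)
  have h_ftc := intervalIntegral.integral_eq_sub_of_hasDerivAt
    (fun θ _ => hasDerivAt_sin_mul_cos_mul_rpow hm θ) (h_cos.sub h_sin)
  rw [intervalIntegral.integral_sub h_cos h_sin, intervalIntegral.integral_const_mul,
    cos_pi_div_two, sin_zero, mul_zero, zero_mul, zero_mul, zero_mul, sub_self] at h_ftc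
  exact sub_eq_zero.mp h_ftc

theorem hasDerivAt_K (hm : m < 1) : HasDerivAt K (B m / (2 * (1 - m))) m := by
  have h_ne : 1 - m ≠ 0 := (sub_pos.mpr hm).ne'
  refine (hasDerivAt_weighted_neg_half hm (by simp)).congr_deriv ?_
  rw [B_eq_one_sub_mul_weighted hm]
  simp only [one_mul]
  field_simp

theorem K_eq_two_mul_B_add (hm : m < 1) :
    K m = 2 * B m + m * weighted (fun θ => cos θ ^ 2 * sin θ ^ 2) (-(3/2)) m := by
  have h_int {f : ℝ → ℝ} (hf : Continuous f) : IntervalIntegrable f volume 0 (π / 2) :=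
    hf.intervalIntegrable _ _
  have h_split : K m = B m + weighted (fun θ => sin θ ^ 2) (-(1/2)) m := by
    rw [B, ← weighted_add hm (h_int (by fun_prop)) (h_int (by fun_prop))]
    simp only [cos_sq_add_sin_sq, K]
  have h_weight (θ : ℝ) : sin θ ^ 2 * (1 - m * sin θ ^ 2)
      = (1 - m) * sin θ ^ 2 + m * (cos θ ^ 2 * sin θ ^ 2) := by
    linear_combination (-m * sin θ ^ 2) * sin_sq_add_cos_sq θ
  have h_sin : weighted (fun θ => sin θ ^ 2) (-(1/2)) m
      = B m + m * weighted (fun θ => cos θ ^ 2 * sin θ ^ 2) (-(3/2)) m := by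
    rw [show (-(1/2) : ℝ) = -(3/2) + 1 by norm_num, weighted_add_one hm]
    simp only [h_weight]
    rw [weighted_add hm (h_int (by fun_prop)) (h_int (by fun_prop)), weighted_const_mul,
      weighted_const_mul, ← B_eq_one_sub_mul_weighted hm]
  rw [h_split, h_sin]
  ring

theorem hasDerivAt_id_mul_B (hm : m < 1) : HasDerivAt (fun m => m * B m) (K m / 2) m := by
  have h_B := hasDerivAt_weighted_neg_half hm (w := fun θ => cos θ ^ 2)
    (Continuous.intervalIntegrable (by fun_prop) _ _)
  refine ((hasDerivAt_id m).fun_mul h_B).congr_deriv ?_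
  rw [K_eq_two_mul_B_add hm, B]
  simp only [id]
  ring

end CompleteIntegrals

section LimitsAtOne

theorem tendsto_B_one : Tendsto B (𝓝[<] 1) (𝓝 1) := by
  have h := tendsto_weighted_mul_cos (continuous_cos.intervalIntegrable 0 (π / 2))
  rw [integral_cos, sin_pi_div_two, sin_zero, sub_zero] at h
  simp only [← sq] at h
  exact h

theorem one_add_sin_pos {θ : ℝ} (hθ : θ ∈ uIcc 0 (π / 2)) : 0 < 1 + sin θ := by
  rw [uIcc_of_le (by positivity)] at hθ
  linarith [sin_nonneg_of_nonneg_of_le_pi hθ.1 (by linarith [hθ.2, pi_pos])]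

theorem intervalIntegrable_cos_div_one_add_sin :
    IntervalIntegrable (fun θ => cos θ / (1 + sin θ)) volume 0 (π / 2) :=
  ContinuousOn.intervalIntegrable
    (ContinuousOn.div (by fun_prop) (by fun_prop) fun _ hθ => (one_add_sin_pos hθ).ne')

theorem integral_cos_div_one_add_sin :
    ∫ θ in (0 : ℝ)..(π / 2), cos θ / (1 + sin θ) = log 2 := by
  rw [intervalIntegral.integral_eq_sub_of_hasDerivAt (f := fun θ => log (1 + sin θ))
    (fun θ hθ => ((hasDerivAt_sin θ).const_add 1).log (one_add_sin_pos hθ).ne')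
    intervalIntegrable_cos_div_one_add_sin]
  norm_num

theorem tendsto_weighted_one_sub_sin :
    Tendsto (weighted (fun θ => 1 - sin θ) (-(1/2))) (𝓝[<] 1) (𝓝 (log 2)) := by
  have h := tendsto_weighted_mul_cos intervalIntegrable_cos_div_one_add_sin
  rw [integral_cos_div_one_add_sin] at h
  refine h.congr fun m => intervalIntegral.integral_congr fun θ hθ => ?_
  have h_pos := one_add_sin_pos hθ
  have h_weight : cos θ / (1 + sin θ) * cos θ = 1 - sin θ := by
    field_simp
    linear_combination sin_sq_add_cos_sq θ
  simp only [h_weight]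

theorem hasDerivAt_neg_arsinh_cos {r : ℝ} (hr : r ∈ Ioo (-1) 1) (hr₀ : r ≠ 0) (θ : ℝ) :
    HasDerivAt (fun θ => -(arsinh (r / √(1 - r ^ 2) * cos θ) / r))
      (sin θ * (1 - r ^ 2 * sin θ ^ 2) ^ (-(1/2) : ℝ)) θ := by
  have h_sq : r ^ 2 < 1 := (sq_lt_one_iff_abs_lt_one r).mpr (abs_lt.mpr hr)
  have h_compl : 0 < 1 - r ^ 2 := sub_pos.mpr h_sq
  have h_pos := one_sub_mul_sin_sq_pos h_sq θ
  have h_sqrt : √(1 + (r / √(1 - r ^ 2) * cos θ) ^ 2)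
      = √(1 - r ^ 2 * sin θ ^ 2) / √(1 - r ^ 2) := by
    rw [← sqrt_div h_pos.le, mul_pow, div_pow, sq_sqrt h_compl.le, cos_sq']
    congr 1
    field_simp
    ring
  refine ((((hasDerivAt_cos θ).const_mul _).arsinh.div_const r).fun_neg).congr_deriv ?_
  rw [h_sqrt, rpow_neg h_pos.le, ← sqrt_eq_rpow, smul_eq_mul]
  have := sqrt_pos.mpr h_compl
  have := sqrt_pos.mpr h_pos
  field_simp

theorem weighted_sin_sq {r : ℝ} (hr : r ∈ Ioo (-1) 1) (hr₀ : r ≠ 0) :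
    weighted sin (-(1/2)) (r ^ 2) = artanh r / r := by
  have h_sq : r ^ 2 < 1 := (sq_lt_one_iff_abs_lt_one r).mpr (abs_lt.mpr hr)
  rw [weighted, intervalIntegral.integral_eq_sub_of_hasDerivAt
    (fun θ _ => hasDerivAt_neg_arsinh_cos hr hr₀ θ)
    (intervalIntegrable_mul_rpow h_sq (continuous_sin.intervalIntegrable _ _) _)]
  simp [← sinh_artanh hr]

theorem artanh_eq_log_one_add_sub {r : ℝ} (hr : r ∈ Ioo (-1) 1) :
    artanh r = log (1 + r) - log (1 - r ^ 2) / 2 := by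
  have h_add : 1 + r ≠ 0 := by linarith [hr.1]
  have h_sub : 1 - r ≠ 0 := by linarith [hr.2]
  rw [artanh_eq_half_log (Ioo_subset_Icc_self hr), log_div h_add h_sub,
    show 1 - r ^ 2 = (1 + r) * (1 - r) by ring, log_mul h_add h_sub]
  ring

theorem K_add_half_log_eq {m : ℝ} (hm : m ∈ Ioo 0 1) :
    K m + log (1 - m) / 2 = weighted (fun θ => 1 - sin θ) (-(1/2)) m + log (1 + √m) / √m
      - (1 - m) * log (1 - m) / (2 * √m * (1 + √m)) := by
  have h_split : K m = weighted (fun θ => 1 - sin θ) (-(1/2)) m + weighted sin (-(1/2)) m := by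
    rw [← weighted_add hm.2 (Continuous.intervalIntegrable (by fun_prop) _ _)
      (continuous_sin.intervalIntegrable _ _)]
    simp only [sub_add_cancel, K]
  have h_sq : √m ^ 2 = m := sq_sqrt hm.1.le
  have h_pos : 0 < √m := sqrt_pos.mpr hm.1
  have h_mem : √m ∈ Ioo (-1) 1 := ⟨by linarith, by rw [sqrt_lt' one_pos]; simpa using hm.2⟩
  have h_sin : weighted sin (-(1/2)) m = (log (1 + √m) - log (1 - m) / 2) / √m := by
    conv_lhs => rw [← h_sq]
    rw [weighted_sin_sq h_mem h_pos.ne', artanh_eq_log_one_add_sub h_mem, h_sq]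
  rw [h_split, h_sin]
  generalize log (1 - m) = L
  field_simp
  linear_combination L * h_sq

theorem tendsto_K_add_half_log :
    Tendsto (fun m => K m + log (1 - m) / 2) (𝓝[<] 1) (𝓝 (log 4)) := by
  have h_log : ContinuousAt (fun m => log (1 + √m) / √m) 1 :=
    .div (.log (by fun_prop) (by norm_num)) (by fun_prop) (by norm_num)
  have h_mul_log : ContinuousAt
      (fun m : ℝ => (1 - m) * log (1 - m) / (2 * √m * (1 + √m))) 1 :=
    .div (continuous_mul_log.comp (continuous_const.sub continuous_id)).continuousAt
      (by fun_prop) (by norm_num)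
  have h := (tendsto_weighted_one_sub_sin.add (h_log.mono_left nhdsWithin_le_nhds)).sub
    (h_mul_log.mono_left nhdsWithin_le_nhds)
  have h_lim : log 2 + log (1 + √1) / √1 - (1 - 1) * log (1 - 1) / (2 * √1 * (1 + √1)) = log 4 := by
    rw [show (4 : ℝ) = 2 ^ 2 by norm_num, log_pow]
    norm_num
    ring
  rw [h_lim] at h
  refine h.congr' ?_
  filter_upwards [Ioo_mem_nhdsLT zero_lt_one] with m hm
  exact (K_add_half_log_eq hm).symm

theorem tendsto_one_sub_mul_K : Tendsto (fun m => (1 - m) * K m) (𝓝[<] 1) (𝓝 0) := by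
  have h_sub : Tendsto (fun m : ℝ => 1 - m) (𝓝[<] 1) (𝓝 0) :=
    tendsto_nhdsWithin_of_tendsto_nhds (Continuous.tendsto' (by fun_prop) _ _ (sub_self 1))
  have h_mul_log : Tendsto (fun m : ℝ => (1 - m) * log (1 - m)) (𝓝[<] 1) (𝓝 0) :=
    (continuous_mul_log.tendsto' 0 0 (by simp)).comp h_sub
  have h := (h_sub.mul tendsto_K_add_half_log).sub (h_mul_log.div_const 2)
  rw [zero_mul, zero_div, sub_zero] at h
  exact h.congr fun m => by ring

end LimitsAtOne

section LegendreRelation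

variable {m : ℝ}

theorem hasDerivAt_K_one_sub (hm : 0 < m) :
    HasDerivAt (fun m => K (1 - m)) (-(B (1 - m) / (2 * m))) m := by
  simpa only [sub_sub_cancel] using (hasDerivAt_K (sub_lt_self 1 hm)).comp_const_sub 1 m

theorem hasDerivAt_one_sub_mul_B_one_sub (hm : 0 < m) :
    HasDerivAt (fun m => (1 - m) * B (1 - m)) (-(K (1 - m) / 2)) m :=
  (hasDerivAt_id_mul_B (sub_lt_self 1 hm)).comp_const_sub 1 m

/-- The left-hand side of Legendre's relation, classically `E K' + E' K - K K'`. -/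
noncomputable def legendreForm (m : ℝ) : ℝ :=
  m * B m * K (1 - m) + (1 - m) * B (1 - m) * K m

theorem hasDerivAt_legendreForm (hm : m ∈ Ioo 0 1) : HasDerivAt legendreForm 0 m := by
  have h_pos : 0 < m := hm.1
  have h_ne : 1 - m ≠ 0 := (sub_pos.mpr hm.2).ne'
  refine (((hasDerivAt_id_mul_B hm.2).fun_mul (hasDerivAt_K_one_sub hm.1)).fun_add
    ((hasDerivAt_one_sub_mul_B_one_sub hm.1).fun_mul (hasDerivAt_K hm.2))).congr_deriv ?_
  field_simp
  ring

theorem tendsto_legendreForm : Tendsto legendreForm (𝓝[<] 1) (𝓝 (π / 2)) := by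
  have h_id : Tendsto (fun m : ℝ => m) (𝓝[<] 1) (𝓝 1) := nhdsWithin_le_nhds
  have h_sub : Tendsto (fun m : ℝ => 1 - m) (𝓝[<] 1) (𝓝 0) :=
    tendsto_nhdsWithin_of_tendsto_nhds (Continuous.tendsto' (by fun_prop) _ _ (sub_self 1))
  have h_K := (hasDerivAt_K zero_lt_one).continuousAt.tendsto.comp h_sub
  have h_B := (continuousAt_B zero_lt_one).tendsto.comp h_sub
  have h := ((h_id.mul tendsto_B_one).mul h_K).add (tendsto_one_sub_mul_K.mul h_B)
  rw [mul_one, one_mul, zero_mul, add_zero, K_zero] at h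
  exact h.congr fun m => by simp only [legendreForm, Function.comp_apply]; ring

theorem legendreForm_eq (hm : m ∈ Ioo 0 1) : legendreForm m = π / 2 := by
  refine tendsto_nhds_unique (tendsto_const_nhds.congr' ?_) tendsto_legendreForm
  filter_upwards [Ioo_mem_nhdsLT zero_lt_one] with x hx
  exact isOpen_Ioo.is_const_of_deriv_eq_zero isPreconnected_Ioo
    (fun y hy => (hasDerivAt_legendreForm hy).differentiableAt.differentiableWithinAt)
    (fun y hy => (hasDerivAt_legendreForm hy).deriv) hm hx

end LegendreRelation

section ParameterForm

variable {m : ℝ}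

/-- The function `g(r) = (2/π) 𝒦(r) 𝒦'(r) + log (r'/r)` in terms of the parameter `m = r²`. -/
noncomputable def G (m : ℝ) : ℝ :=
  2 / π * K m * K (1 - m) + (log (1 - m) - log m) / 2

theorem hasDerivAt_G (hm : m ∈ Ioo 0 1) : HasDerivAt G (-(2 / π * K m * B (1 - m) / m)) m := by
  have h_pos : 0 < m := hm.1
  have h_ne : 1 - m ≠ 0 := (sub_pos.mpr hm.2).ne'
  have h_log := ((((hasDerivAt_id m).const_sub 1).log h_ne).fun_sub
    (hasDerivAt_log hm.1.ne')).div_const 2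
  refine ((((hasDerivAt_K hm.2).const_mul (2 / π)).fun_mul
    (hasDerivAt_K_one_sub hm.1)).fun_add h_log).congr_deriv ?_
  have h_legendre := legendreForm_eq hm
  rw [legendreForm] at h_legendre
  simp only [id]
  field_simp
  linear_combination 2 * h_legendre

theorem continuousOn_G : ContinuousOn G (Ioo 0 1) :=
  fun _ hm => (hasDerivAt_G hm).continuousAt.continuousWithinAt

theorem strictAntiOn_G : StrictAntiOn G (Ioo 0 1) := by
  refine strictAntiOn_of_deriv_neg (convex_Ioo 0 1) continuousOn_G fun m hm => ?_
  rw [interior_Ioo] at hm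
  have h_K := K_pos hm.2
  have h_B := B_pos (sub_lt_self 1 hm.1)
  have h_pos := hm.1
  rw [(hasDerivAt_G hm).deriv, neg_lt_zero]
  positivity

theorem tendsto_G_zero : Tendsto G (𝓝[>] 0) atTop := by
  have h_log : Tendsto (fun m : ℝ => log (1 - m)) (𝓝[>] 0) (𝓝 0) := by
    have h : ContinuousAt (fun m : ℝ => log (1 - m)) 0 := .log (by fun_prop) (by norm_num)
    simpa using h.tendsto.mono_left nhdsWithin_le_nhds
  have h_neg_log : Tendsto (fun m => -log m) (𝓝[>] 0) atTop :=
    tendsto_neg_atBot_atTop.comp tendsto_log_nhdsGT_zero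
  refine tendsto_atTop_mono' _ ?_ ((h_log.add_atTop h_neg_log).atTop_div_const two_pos)
  filter_upwards [Ioo_mem_nhdsGT zero_lt_one] with m hm
  have h_K := K_pos hm.2
  have h_K' := K_pos (sub_lt_self 1 hm.1)
  rw [G, ← sub_eq_add_neg, le_add_iff_nonneg_left]
  positivity

-- `K (1 - m) - π / 2` is `O(1 - m)` because `K` is differentiable at `0`.
theorem tendsto_K_mul_sub_one :
    Tendsto (fun m => K m * (2 / π * K (1 - m) - 1)) (𝓝[<] 1) (𝓝 0) := by
  have h_sub : Tendsto (fun m : ℝ => 1 - m) (𝓝[<] 1) (𝓝[≠] 0) := by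
    refine tendsto_nhdsWithin_iff.mpr ⟨tendsto_nhdsWithin_of_tendsto_nhds
      (Continuous.tendsto' (by fun_prop) _ _ (sub_self 1)), ?_⟩
    filter_upwards [self_mem_nhdsWithin] with m hm using (sub_pos.mpr hm).ne'
  have h := tendsto_one_sub_mul_K.mul
    (((hasDerivAt_K zero_lt_one).tendsto_slope.comp h_sub).const_mul (2 / π))
  rw [zero_mul] at h
  refine h.congr' ?_
  filter_upwards [self_mem_nhdsWithin] with m hm
  have h_ne : 1 - m ≠ 0 := (sub_pos.mpr hm).ne'
  rw [Function.comp_apply, slope_def_field, K_zero, sub_zero]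
  field_simp

theorem tendsto_G_one : Tendsto G (𝓝[<] 1) (𝓝 (log 4)) := by
  have h_log : Tendsto (fun m : ℝ => log m / 2) (𝓝[<] 1) (𝓝 0) := by
    simpa using ((continuousAt_log one_ne_zero).tendsto.mono_left nhdsWithin_le_nhds).div_const 2
  have h := (tendsto_K_mul_sub_one.add tendsto_K_add_half_log).sub h_log
  rw [zero_add, sub_zero] at h
  exact h.congr fun m => by rw [G]; ring

end ParameterForm

section Modulus

theorem ellK_eq_K_sq (r : ℝ) : ellK r = K (r ^ 2) := by simp [ellK, K, weighted]

theorem mapsTo_sq_Ioo : MapsTo (fun r : ℝ => r ^ 2) (Ioo 0 1) (Ioo 0 1) :=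
  fun _ hr => ⟨pow_pos hr.1 2, pow_lt_one₀ hr.1.le hr.2 two_ne_zero⟩

theorem strictMonoOn_sq_Ioo : StrictMonoOn (fun r : ℝ => r ^ 2) (Ioo 0 1) :=
  (pow_left_strictMonoOn₀ two_ne_zero).mono fun _ hr => hr.1.le

theorem tendsto_sq_nhdsGT_zero : Tendsto (fun r : ℝ => r ^ 2) (𝓝[>] 0) (𝓝[>] 0) := by
  have h : ContinuousWithinAt (fun r : ℝ => r ^ 2) (Ioo 0 1) 0 := by fun_prop
  simpa using h.tendsto_nhdsWithin mapsTo_sq_Ioo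

theorem tendsto_sq_nhdsLT_one : Tendsto (fun r : ℝ => r ^ 2) (𝓝[<] 1) (𝓝[<] 1) := by
  have h : ContinuousWithinAt (fun r : ℝ => r ^ 2) (Ioo 0 1) 1 := by fun_prop
  simpa using h.tendsto_nhdsWithin mapsTo_sq_Ioo

theorem G_sq {r : ℝ} (hr : r ∈ Ioo 0 1) :
    G (r ^ 2) = 2 / π * ellK r * ellK √(1 - r ^ 2) + log (√(1 - r ^ 2) / r) := by
  have h_pos : 0 < 1 - r ^ 2 := sub_pos.mpr (mapsTo_sq_Ioo hr).2
  rw [G, ellK_eq_K_sq, ellK_eq_K_sq, sq_sqrt h_pos.le,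
    log_div (sqrt_pos.mpr h_pos).ne' hr.1.ne', log_sqrt h_pos.le, log_pow]
  push_cast
  ring

end Modulus

end EllipticIntegral

open EllipticIntegral in
theorem stmt_3 (g : ℝ → ℝ)
    (hg : g = fun r : ℝ => 2 / Real.pi * ellK r * ellK (Real.sqrt (1 - r ^ 2)) +
      Real.log (Real.sqrt (1 - r ^ 2) / r)) :
    StrictAntiOn g (Set.Ioo 0 1) ∧
    Filter.Tendsto g (nhdsWithin 0 (Set.Ioi 0)) Filter.atTop ∧
    Filter.Tendsto g (nhdsWithin 1 (Set.Iio 1)) (nhds (Real.log 4)) ∧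
    g '' Set.Ioo 0 1 = Set.Ioi (Real.log 4) := by
  have hGg : EqOn (fun r => G (r ^ 2)) g (Ioo 0 1) := fun r hr => by
    simp only [hg, G_sq hr]
  have h_anti : StrictAntiOn g (Ioo 0 1) :=
    (strictAntiOn_G.comp_strictMonoOn strictMonoOn_sq_Ioo mapsTo_sq_Ioo).congr hGg
  have h_cont : ContinuousOn g (Ioo 0 1) :=
    (continuousOn_G.comp (continuous_pow 2).continuousOn mapsTo_sq_Ioo).congr hGg.symm
  have h_zero : Tendsto g (nhdsWithin 0 (Ioi 0)) atTop :=
    (tendsto_G_zero.comp tendsto_sq_nhdsGT_zero).congr'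
      (hGg.eventuallyEq_of_mem (Ioo_mem_nhdsGT zero_lt_one))
  have h_one : Tendsto g (nhdsWithin 1 (Iio 1)) (nhds (Real.log 4)) :=
    (tendsto_G_one.comp tendsto_sq_nhdsLT_one).congr'
      (hGg.eventuallyEq_of_mem (Ioo_mem_nhdsLT zero_lt_one))
  exact ⟨h_anti, h_zero, h_one,
    image_Ioo_eq_Ioi_of_strictAntiOn zero_lt_one h_anti h_cont h_zero h_one⟩
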